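/- arXiv:2103.14809 — 2 statements merged into one kernel-verified Lean document; each statement's English description precedes it below -/
import Mathlib

section
/- Let R be an NP-ring and M an R-module. The following are equivalent: (1) M is φ-flat; (2) Hom_R(M,E) is nonnil-injective for every injective R-module E; (3) Hom_R(M,E) is nonnil-FP-injective for every injective R-module E; (4) Hom_R(M,E) is nonnil-injective for every injective cogenerator E; (5) Hom_R(M,E) is nonnil-FP-injective for every injective cogenerator E. -/
open CategoryTheory

universe u

/-- A commutative ring is a `φ`-ring if its nilradical is a divided prime ideal. -/
def IsPhiRing (R : Type u) [CommRing R] : Prop :=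
  (nilradical R).IsPrime ∧ ∀ x : R, x ∉ nilradical R → nilradical R ≤ Ideal.span {x}

/-- A ring is nonnil-coherent if every finitely generated nonnil ideal is
finitely presented as a module. -/
def IsNonnilCoherent (R : Type u) [CommRing R] : Prop :=
  ∀ I : Ideal R, I.FG → ¬ I ≤ nilradical R → Module.FinitePresentation R I

/-- A module is φ-torsion if every element is annihilated by a nonnil ideal. -/
def IsPhiTorsion (R : Type u) [CommRing R] (T : Type u) [AddCommGroup T] [Module R T] : Prop :=
  ∀ t : T, ∃ I : Ideal R, ¬ I ≤ nilradical R ∧ ∀ a ∈ I, a • t = 0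

/-- A module `M` is φ-flat if `Tor₁ᴿ(T, M) = 0` for every φ-torsion module `T`. -/
def IsPhiFlat (R : Type u) [CommRing R] (M : Type u) [AddCommGroup M] [Module R M] : Prop :=
  ∀ (T : Type u) [AddCommGroup T] [Module R T], IsPhiTorsion R T →
    Subsingleton (((Tor (ModuleCat.{u} R) 1).obj (ModuleCat.of R T)).obj (ModuleCat.of R M))

/-- A module `M` is nonnil-injective if `Ext¹ᴿ(T, M) = 0` for every φ-torsion module `T`. -/
def IsNonnilInjective (R : Type u) [CommRing R] (M : Type u) [AddCommGroup M] [Module R M] :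
    Prop :=
  ∀ (T : Type u) [AddCommGroup T] [Module R T], IsPhiTorsion R T →
    Subsingleton (((Ext R (ModuleCat.{u} R) 1).obj (Opposite.op (ModuleCat.of R T))).obj
      (ModuleCat.of R M))

/-- A module `M` is nonnil-FP-injective if `Ext¹ᴿ(T, M) = 0` for every finitely
presented φ-torsion module `T`. -/
def IsNonnilFPInjective (R : Type u) [CommRing R] (M : Type u) [AddCommGroup M] [Module R M] :
    Prop :=
  ∀ (T : Type u) [AddCommGroup T] [Module R T], Module.FinitePresentation R T →
    IsPhiTorsion R T →
    Subsingleton (((Ext R (ModuleCat.{u} R) 1).obj (Opposite.op (ModuleCat.of R T))).obj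
      (ModuleCat.of R M))

/-- An injective cogenerator of the category of `R`-modules. -/
def IsInjectiveCogenerator (R : Type u) [CommRing R] (E : Type u) [AddCommGroup E]
    [Module R E] : Prop :=
  Module.Injective R E ∧
    ∀ (M : Type u) [AddCommGroup M] [Module R M], (∀ f : M →ₗ[R] E, f = 0) → Subsingleton M

/-!
Compute `Ext¹(T, Hom(M, E))` and `Tor₁(T, M)` from the same projective resolution of `T`, with
first syzygy `i : K → F`: the former vanishes iff `Hom(i, Hom(M, E))` is surjective, the latter iff
`i ⊗ M` is injective. By the tensor-hom adjunction the first map is `Hom(i ⊗ M, E)`, so when `E` is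
injective the second condition implies the first, and when `E` is also a cogenerator the two are
equivalent. It remains to test φ-flatness on finitely presented modules: as the nilradical is prime,
a finitely generated module whose generators have nonnil annihilators is φ-torsion, which allows
every vanishing phenomenon over a φ-torsion module to be lifted to a finitely presented one.
-/

section PhiTorsion

variable {R : Type u} [CommRing R]

theorem isPhiTorsion_iff_exists_notMem_nilradical {T : Type u} [AddCommGroup T] [Module R T] :
    IsPhiTorsion R T ↔ ∀ t : T, ∃ c ∉ nilradical R, c • t = 0 := by
  refine forall_congr' fun t => ⟨fun ⟨I, hI, hIt⟩ => ?_, fun ⟨c, hc, hct⟩ => ?_⟩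
  · obtain ⟨c, hcI, hc⟩ := SetLike.not_le_iff_exists.1 hI
    exact ⟨c, hc, hIt c hcI⟩
  · refine ⟨Ideal.span {c}, by rwa [Ideal.span_singleton_le_iff_mem], fun a ha => ?_⟩
    obtain ⟨b, rfl⟩ := Ideal.mem_span_singleton'.1 ha
    rw [mul_smul, hct, smul_zero]

theorem IsPhiTorsion.of_surjective {T T' : Type u} [AddCommGroup T] [Module R T]
    [AddCommGroup T'] [Module R T'] (hT : IsPhiTorsion R T) (f : T →ₗ[R] T')
    (hf : Function.Surjective f) : IsPhiTorsion R T' := by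
  intro t'
  obtain ⟨t, rfl⟩ := hf t'
  obtain ⟨I, hI, hIt⟩ := hT t
  exact ⟨I, hI, fun a ha => by rw [← map_smul, hIt a ha, map_zero]⟩

theorem isPhiTorsion_of_span_eq_top (hNP : (nilradical R).IsPrime) {T : Type u} [AddCommGroup T]
    [Module R T] {s : Set T} (hs : Submodule.span R s = ⊤)
    (hann : ∀ t ∈ s, ∃ c ∉ nilradical R, c • t = 0) : IsPhiTorsion R T := by
  rw [isPhiTorsion_iff_exists_notMem_nilradical]
  intro t
  have ht : t ∈ Submodule.span R s := hs ▸ Submodule.mem_top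
  induction ht using Submodule.span_induction with
  | mem t ht => exact hann t ht
  | zero => exact ⟨1, hNP.one_notMem, smul_zero 1⟩
  | add t₁ t₂ _ _ ih₁ ih₂ =>
    obtain ⟨c₁, hc₁, hct₁⟩ := ih₁
    obtain ⟨c₂, hc₂, hct₂⟩ := ih₂
    refine ⟨c₁ * c₂, hNP.mul_notMem hc₁ hc₂, ?_⟩
    rw [smul_add, mul_comm, mul_smul, hct₁, mul_comm, mul_smul, hct₂, smul_zero, smul_zero,
      add_zero]
  | smul a t _ ih =>
    obtain ⟨c, hc, hct⟩ := ih
    exact ⟨c, hc, by rw [smul_comm, hct, smul_zero]⟩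

theorem IsPhiTorsion.exists_fg_le_ker (hNP : (nilradical R).IsPrime) {T F : Type u}
    [AddCommGroup T] [Module R T] [AddCommGroup F] [Module R F] [Module.Finite R F]
    (hT : IsPhiTorsion R T) (f : F →ₗ[R] T) :
    ∃ N ≤ LinearMap.ker f, N.FG ∧ IsPhiTorsion R (F ⧸ N) := by
  obtain ⟨s, hs⟩ := Module.Finite.fg_top (R := R) (M := F)
  choose c hc hcf using fun x => isPhiTorsion_iff_exists_notMem_nilradical.1 hT (f x)
  refine ⟨Submodule.span R ((fun x => c x • x) '' s), ?_,
    Submodule.fg_span (s.finite_toSet.image _), ?_⟩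
  · rw [Submodule.span_le]
    rintro _ ⟨x, -, rfl⟩
    simp [hcf]
  · refine isPhiTorsion_of_span_eq_top hNP (s := Submodule.mkQ _ '' s) ?_ ?_
    · rw [Submodule.span_image, hs, Submodule.map_top, Submodule.range_mkQ]
    · rintro _ ⟨x, hx, rfl⟩
      refine ⟨c x, hc x, ?_⟩
      rw [← map_smul, Submodule.mkQ_apply, Submodule.Quotient.mk_eq_zero]
      exact Submodule.subset_span ⟨x, hx, rfl⟩

end PhiTorsion

section TensorProduct

variable {R K F T L P M : Type*} [CommRing R] [AddCommGroup K] [Module R K]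
  [AddCommGroup F] [Module R F] [AddCommGroup T] [Module R T] [AddCommGroup L] [Module R L]
  [AddCommGroup P] [Module R P] [AddCommGroup M] [Module R M]
  {i : K →ₗ[R] F} {p : F →ₗ[R] T} {j : L →ₗ[R] P} {q : P →ₗ[R] M}

theorem lTensor_rTensor_comm_apply (f : F →ₗ[R] T) (j : L →ₗ[R] P) (x : TensorProduct R F L) :
    j.lTensor T (f.rTensor L x) = f.rTensor P (j.lTensor F x) := by
  rw [← LinearMap.comp_apply, LinearMap.lTensor_comp_rTensor, ← LinearMap.rTensor_comp_lTensor,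
    LinearMap.comp_apply]

/- In `T ⊗ L ← F ⊗ L → F ⊗ P ← K ⊗ P → K ⊗ M`, an element killed by `T ⊗ L → T ⊗ P` is chased
from the left end to the right end, where the injectivity of `K ⊗ M → F ⊗ M` makes it vanish. -/
theorem injective_lTensor_of_injective_rTensor [Module.Flat R F]
    (hip : Function.Exact i p) (hp : Function.Surjective p) (hjq : Function.Exact j q)
    (hq : Function.Surjective q) (hj : Function.Injective j)
    (h : Function.Injective (i.rTensor M)) : Function.Injective (j.lTensor T) := by
  rw [injective_iff_map_eq_zero]
  intro x hx
  obtain ⟨y, rfl⟩ := LinearMap.rTensor_surjective L hp x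
  obtain ⟨z, hz⟩ : ∃ z, i.rTensor P z = j.lTensor F y := by
    refine (rTensor_exact P hip hp _).1 ?_
    rwa [← lTensor_rTensor_comm_apply]
  obtain ⟨w, rfl⟩ : ∃ w, j.lTensor K w = z := by
    refine (lTensor_exact K hjq hq _).1 (h ?_)
    rw [map_zero, ← lTensor_rTensor_comm_apply, hz]
    exact (lTensor_exact F hjq hq _).2 ⟨y, rfl⟩
  have hw : i.rTensor L w = y := by
    apply Module.Flat.lTensor_preserves_injective_linearMap (M := F) j hj
    rw [← hz, lTensor_rTensor_comm_apply]
  exact (rTensor_exact L hip hp _).2 ⟨w, hw⟩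

theorem injective_lTensor_iff_injective_rTensor [Module.Flat R F] [Module.Flat R P]
    (hip : Function.Exact i p) (hp : Function.Surjective p) (hi : Function.Injective i)
    (hjq : Function.Exact j q) (hq : Function.Surjective q) (hj : Function.Injective j) :
    Function.Injective (j.lTensor T) ↔ Function.Injective (i.rTensor M) := by
  refine ⟨fun h => ?_, injective_lTensor_of_injective_rTensor hip hp hjq hq hj⟩
  rw [LinearMap.lTensor_inj_iff_rTensor_inj] at h
  rw [← LinearMap.lTensor_inj_iff_rTensor_inj]
  exact injective_lTensor_of_injective_rTensor hjq hq hip hp hi h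

theorem exists_fg_le_ker_rTensor_mkQ_eq_zero [Module.Flat R P] (f : F →ₗ[R] T)
    {x : TensorProduct R F P} (hx : f.rTensor P x = 0) :
    ∃ N ≤ LinearMap.ker f, N.FG ∧ N.mkQ.rTensor P x = 0 := by
  obtain ⟨y, rfl⟩ := (Module.Flat.rTensor_exact P (LinearMap.exact_subtype_ker_map f) x).1 hx
  obtain ⟨N, hN, hNf, z, rfl⟩ := Submodule.exists_fg_le_eq_rTensor_inclusion y
  refine ⟨N, hNf, hN, ?_⟩
  have hcomp : (N.mkQ ∘ₗ (LinearMap.ker f).subtype) ∘ₗ Submodule.inclusion hNf = 0 := by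
    ext x
    simp
  rw [← LinearMap.rTensor_comp_apply, ← LinearMap.rTensor_comp_apply, hcomp,
    LinearMap.rTensor_zero, LinearMap.zero_apply]

theorem exists_linearMap_pi_rTensor_eq (x : TensorProduct R T L) :
    ∃ (n : ℕ) (f : (Fin n → R) →ₗ[R] T) (y : TensorProduct R (Fin n → R) L),
      f.rTensor L y = x := by
  obtain ⟨T₀, hT₀, y, rfl⟩ := Submodule.exists_fg_le_eq_rTensor_subtype x
  have : Module.Finite R T₀ := Module.Finite.iff_fg.2 hT₀
  obtain ⟨n, f, hf⟩ := Module.Finite.exists_fin' R T₀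
  obtain ⟨z, rfl⟩ := LinearMap.rTensor_surjective L hf y
  exact ⟨n, T₀.subtype ∘ₗ f, z, LinearMap.rTensor_comp_apply L _ _ z⟩

theorem surjective_lcomp_hom_iff_surjective_lcomp_rTensor {E : Type*} [AddCommGroup E]
    [Module R E] (i : K →ₗ[R] F) :
    Function.Surjective (i.lcomp R (M →ₗ[R] E)) ↔
      Function.Surjective ((i.rTensor M).lcomp R E) := by
  have hcomm : (i.rTensor M).lcomp R E ∘ TensorProduct.lift.equiv (.id R) F M E =
      TensorProduct.lift.equiv (.id R) K M E ∘ i.lcomp R (M →ₗ[R] E) := by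
    ext φ x m
    simp
  rw [← EquivLike.surjective_comp (TensorProduct.lift.equiv (.id R) F M E), hcomm,
    EquivLike.comp_surjective]

end TensorProduct

/- An element of `T ⊗ L` and a relation killing its image in `T ⊗ P` involve finitely many
elements of `T`; since their annihilators are nonnil, both live over a finitely presented
φ-torsion module mapping to `T`. -/
theorem injective_lTensor_of_forall_finitePresentation {R : Type u} [CommRing R]
    (hNP : (nilradical R).IsPrime) {L P : Type*} [AddCommGroup L] [Module R L]
    [AddCommGroup P] [Module R P] [Module.Flat R P] (j : L →ₗ[R] P)
    (h : ∀ (T : Type u) [AddCommGroup T] [Module R T], Module.FinitePresentation R T →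
      IsPhiTorsion R T → Function.Injective (j.lTensor T))
    {T : Type u} [AddCommGroup T] [Module R T] (hT : IsPhiTorsion R T) :
    Function.Injective (j.lTensor T) := by
  rw [injective_iff_map_eq_zero]
  intro x hx
  obtain ⟨n, f, y, rfl⟩ := exists_linearMap_pi_rTensor_eq x
  rw [lTensor_rTensor_comm_apply] at hx
  obtain ⟨N₁, hN₁f, hN₁, hy⟩ := exists_fg_le_ker_rTensor_mkQ_eq_zero f hx
  obtain ⟨N₂, hN₂f, hN₂, htors⟩ := hT.exists_fg_le_ker hNP f
  let N := N₁ ⊔ N₂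
  have hfp : Module.FinitePresentation R ((Fin n → R) ⧸ N) :=
    Module.finitePresentation_of_surjective N.mkQ N.mkQ_surjective
      (by rw [Submodule.ker_mkQ]; exact hN₁.sup hN₂)
  have hN : IsPhiTorsion R ((Fin n → R) ⧸ N) :=
    htors.of_surjective (Submodule.factor le_sup_right) (Submodule.factor_surjective _)
  have hy₀ : N.mkQ.rTensor L y = 0 := by
    refine (injective_iff_map_eq_zero _).1 (h _ hfp hN) _ ?_
    rw [lTensor_rTensor_comm_apply, ← Submodule.factor_comp_mk (le_sup_left : N₁ ≤ N),
      LinearMap.rTensor_comp_apply, hy, map_zero]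
  rw [← N.liftQ_mkQ f (sup_le hN₁f hN₂f), LinearMap.rTensor_comp_apply, hy₀, map_zero]

section RangeCriteria

variable {R A B C : Type*} [CommRing R] [AddCommGroup A] [Module R A] [AddCommGroup B]
  [Module R B] [AddCommGroup C] [Module R C] {f : A →ₗ[R] B} {g : B →ₗ[R] C}

theorem exact_rangeRestrict (hfg : Function.Exact f g) :
    Function.Exact f g.rangeRestrict :=
  (Submodule.subtype_injective _).comp_exact_iff_exact.1 hfg

theorem exact_lTensor_iff_injective_lTensor_range (T : Type*) [AddCommGroup T] [Module R T]
    (hfg : Function.Exact f g) :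
    Function.Exact (f.lTensor T) (g.lTensor T) ↔
      Function.Injective ((LinearMap.range g).subtype.lTensor T) := by
  have hsurj := LinearMap.lTensor_surjective T g.surjective_rangeRestrict
  have hexact := lTensor_exact T (exact_rangeRestrict hfg) g.surjective_rangeRestrict
  have hcomp : g.lTensor T =
      (LinearMap.range g).subtype.lTensor T ∘ₗ g.rangeRestrict.lTensor T := by
    rw [← LinearMap.lTensor_comp]
    rfl
  rw [hcomp]
  refine ⟨fun H => (injective_iff_map_eq_zero _).2 fun z hz => ?_,
    fun H => H.comp_exact_iff_exact.2 hexact⟩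
  obtain ⟨y, rfl⟩ := hsurj z
  exact (hexact y).2 ((H y).1 hz)

theorem exact_lcomp_iff_surjective_lcomp_range (N : Type*) [AddCommGroup N] [Module R N]
    (hfg : Function.Exact f g) :
    Function.Exact (g.lcomp R N) (f.lcomp R N) ↔
      Function.Surjective ((LinearMap.range g).subtype.lcomp R N) := by
  have hinj := LinearMap.lcomp_injective_of_surjective (S := R) (N := N) g.rangeRestrict
    g.surjective_rangeRestrict
  have hexact := LinearMap.exact_lcomp_of_exact_of_surjective N (exact_rangeRestrict hfg)
    g.surjective_rangeRestrict
  have hcomp : g.lcomp R N =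
      g.rangeRestrict.lcomp R N ∘ₗ (LinearMap.range g).subtype.lcomp R N := rfl
  rw [hcomp]
  refine ⟨fun H φ => ?_, fun H => H.comp_exact_iff_exact.2 hexact⟩
  obtain ⟨ψ, hψ⟩ := (H _).1 ((hexact _).2 ⟨φ, rfl⟩)
  exact ⟨ψ, hinj hψ⟩

end RangeCriteria

section ProjectiveResolution

variable {R : Type u} [CommRing R] {X : ModuleCat.{u} R} (P : ProjectiveResolution X)

theorem flat_projectiveResolution (n : ℕ) : Module.Flat R (P.complex.X n) :=
  have : Module.Projective R (P.complex.X n) :=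
    (IsProjective.iff_projective _).2 (P.projective n)
  inferInstance

theorem projectiveResolution_exact_d_two_one :
    Function.Exact (P.complex.d 2 1).hom (P.complex.d 1 0).hom :=
  (ShortComplex.ShortExact.moduleCat_exact_iff_function_exact _).1 (P.exact_succ 0)

theorem exists_surjective_exact_range_d_one_zero :
    ∃ p : P.complex.X 0 →ₗ[R] X, Function.Surjective p ∧
      Function.Exact (LinearMap.range (P.complex.d 1 0).hom).subtype p := by
  let p : P.complex.X 0 ⟶ X := P.π.f 0
  have hp : Function.Surjective p :=
    (ModuleCat.epi_iff_surjective p).1 (inferInstanceAs (Epi (P.π.f 0)))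
  have hexact : (ShortComplex.mk (P.complex.d 1 0) p P.complex_d_comp_π_f_zero).Exact :=
    ShortComplex.exact_of_g_is_cokernel _ P.isColimitCokernelCofork
  rw [ShortComplex.ShortExact.moduleCat_exact_iff_function_exact] at hexact
  refine ⟨p.hom, hp, ?_⟩
  rw [LinearMap.exact_iff, Submodule.range_subtype]
  exact hexact.linearMap_ker_eq

theorem subsingleton_ext_one_iff_surjective_lcomp (N : Type u) [AddCommGroup N] [Module R N] :
    Subsingleton (((Ext R (ModuleCat.{u} R) 1).obj (Opposite.op X)).obj (ModuleCat.of R N)) ↔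
      Function.Surjective ((LinearMap.range (P.complex.d 1 0).hom).subtype.lcomp R N) := by
  rw [← exact_lcomp_iff_surjective_lcomp_range N (projectiveResolution_exact_d_two_one P),
    ← ModuleCat.isZero_iff_subsingleton, (P.isoExt 1 (ModuleCat.of R N)).isZero_iff,
    ← HomologicalComplex.exactAt_iff_isZero_homology,
    HomologicalComplex.exactAt_iff' _ 0 1 2 (by simp) (by simp),
    ShortComplex.ShortExact.moduleCat_exact_iff_function_exact]
  exact (Function.Exact.iff_of_ladder_linearEquiv (e₁ := ModuleCat.homLinearEquiv (S := R))
    (e₂ := ModuleCat.homLinearEquiv (S := R)) (e₃ := ModuleCat.homLinearEquiv (S := R))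
    rfl rfl).symm

theorem subsingleton_tor_one_iff_injective_lTensor (T : Type u) [AddCommGroup T] [Module R T] :
    Subsingleton (((Tor (ModuleCat.{u} R) 1).obj (ModuleCat.of R T)).obj X) ↔
      Function.Injective ((LinearMap.range (P.complex.d 1 0).hom).subtype.lTensor T) := by
  rw [← exact_lTensor_iff_injective_lTensor_range T (projectiveResolution_exact_d_two_one P),
    ← ModuleCat.isZero_iff_subsingleton, Tor_obj, (P.isoLeftDerivedObj _ 1).isZero_iff]
  refine (HomologicalComplex.exactAt_iff_isZero_homology _ _).symm.trans ?_
  rw [HomologicalComplex.exactAt_iff' _ 2 1 0 (by simp) (by simp),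
    ShortComplex.ShortExact.moduleCat_exact_iff_function_exact]
  rfl

theorem subsingleton_tor_one_iff_injective_rTensor (M : Type u) [AddCommGroup M] [Module R M] :
    Subsingleton (((Tor (ModuleCat.{u} R) 1).obj X).obj (ModuleCat.of R M)) ↔
      Function.Injective ((LinearMap.range (P.complex.d 1 0).hom).subtype.rTensor M) := by
  let Q := projectiveResolution (ModuleCat.of R M)
  obtain ⟨p, hp, hip⟩ := exists_surjective_exact_range_d_one_zero P
  obtain ⟨q, hq, hjq⟩ := exists_surjective_exact_range_d_one_zero Q
  have := flat_projectiveResolution P 0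
  have := flat_projectiveResolution Q 0
  exact (subsingleton_tor_one_iff_injective_lTensor Q X).trans
    (injective_lTensor_iff_injective_rTensor hip hp (Submodule.subtype_injective _) hjq hq
      (Submodule.subtype_injective _))

end ProjectiveResolution

section Duality

theorem surjective_lcomp_of_injective {R : Type*} [CommRing R] {A B E : Type u}
    [AddCommGroup A] [Module R A] [AddCommGroup B] [Module R B] [AddCommGroup E] [Module R E]
    (hE : Module.Injective R E) {f : A →ₗ[R] B} (hf : Function.Injective f) :
    Function.Surjective (f.lcomp R E) := by
  intro g
  obtain ⟨h, hh⟩ := hE.out f hf g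
  exact ⟨h, LinearMap.ext hh⟩

variable {R : Type u} [CommRing R]

theorem IsInjectiveCogenerator.surjective_lcomp_iff {A B E : Type u} [AddCommGroup A] [Module R A]
    [AddCommGroup B] [Module R B] [AddCommGroup E] [Module R E]
    (hE : IsInjectiveCogenerator R E) {f : A →ₗ[R] B} :
    Function.Surjective (f.lcomp R E) ↔ Function.Injective f := by
  refine ⟨fun hf => ?_, surjective_lcomp_of_injective hE.1⟩
  rw [← LinearMap.ker_eq_bot, ← Submodule.subsingleton_iff_eq_bot]
  refine hE.2 _ fun g => ?_
  obtain ⟨g', rfl⟩ := surjective_lcomp_of_injective hE.1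
    (Submodule.subtype_injective (LinearMap.ker f)) g
  obtain ⟨g'', rfl⟩ := hf g'
  ext x
  simp

theorem isInjectiveCogenerator_characterModule (R : Type u) [CommRing R] :
    IsInjectiveCogenerator R (CharacterModule R) := by
  refine ⟨Module.Flat.iff_characterModule_injective.1 inferInstance, fun M _ _ h => ?_⟩
  refine subsingleton_of_forall_eq 0 fun m => (TensorProduct.rid R M).symm.injective ?_
  rw [map_zero]
  refine CharacterModule.eq_zero_of_character_apply fun c => ?_
  obtain ⟨f, rfl⟩ := CharacterModule.homEquiv (R := R).surjective c
  rw [h f, map_zero]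
  rfl

theorem subsingleton_ext_one_hom_of_subsingleton_tor_one {T M E : Type u} [AddCommGroup T]
    [Module R T] [AddCommGroup M] [Module R M] [AddCommGroup E] [Module R E]
    (hE : Module.Injective R E)
    (h : Subsingleton
      (((Tor (ModuleCat.{u} R) 1).obj (ModuleCat.of R T)).obj (ModuleCat.of R M))) :
    Subsingleton (((Ext R (ModuleCat.{u} R) 1).obj (Opposite.op (ModuleCat.of R T))).obj
      (ModuleCat.of R (M →ₗ[R] E))) := by
  let P := projectiveResolution (ModuleCat.of R T)
  rw [subsingleton_tor_one_iff_injective_rTensor P] at h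
  rw [subsingleton_ext_one_iff_surjective_lcomp P,
    surjective_lcomp_hom_iff_surjective_lcomp_rTensor]
  exact surjective_lcomp_of_injective hE h

theorem IsInjectiveCogenerator.subsingleton_ext_one_hom_iff {T M E : Type u} [AddCommGroup T]
    [Module R T] [AddCommGroup M] [Module R M] [AddCommGroup E] [Module R E]
    (hE : IsInjectiveCogenerator R E) :
    Subsingleton (((Ext R (ModuleCat.{u} R) 1).obj (Opposite.op (ModuleCat.of R T))).obj
      (ModuleCat.of R (M →ₗ[R] E))) ↔
    Subsingleton
      (((Tor (ModuleCat.{u} R) 1).obj (ModuleCat.of R T)).obj (ModuleCat.of R M)) := by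
  let P := projectiveResolution (ModuleCat.of R T)
  rw [subsingleton_tor_one_iff_injective_rTensor P, subsingleton_ext_one_iff_surjective_lcomp P,
    surjective_lcomp_hom_iff_surjective_lcomp_rTensor, hE.surjective_lcomp_iff]

end Duality

section PhiFlat

variable {R : Type u} [CommRing R] {M : Type u} [AddCommGroup M] [Module R M]

theorem isPhiFlat_of_forall_finitePresentation (hNP : (nilradical R).IsPrime)
    (h : ∀ (T : Type u) [AddCommGroup T] [Module R T], Module.FinitePresentation R T →
      IsPhiTorsion R T → Subsingleton
        (((Tor (ModuleCat.{u} R) 1).obj (ModuleCat.of R T)).obj (ModuleCat.of R M))) :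
    IsPhiFlat R M := by
  let Q := projectiveResolution (ModuleCat.of R M)
  have := flat_projectiveResolution Q 0
  simp only [subsingleton_tor_one_iff_injective_lTensor Q] at h
  intro T _ _ hT
  rw [subsingleton_tor_one_iff_injective_lTensor Q]
  exact injective_lTensor_of_forall_finitePresentation hNP _ h hT

theorem IsNonnilInjective.isNonnilFPInjective (h : IsNonnilInjective R M) :
    IsNonnilFPInjective R M :=
  fun T _ _ _ hT => h T hT

theorem IsPhiFlat.isNonnilInjective_hom (h : IsPhiFlat R M) {E : Type u} [AddCommGroup E]
    [Module R E] (hE : Module.Injective R E) : IsNonnilInjective R (M →ₗ[R] E) :=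
  fun T _ _ hT => subsingleton_ext_one_hom_of_subsingleton_tor_one hE (h T hT)

theorem IsInjectiveCogenerator.isPhiFlat_of_isNonnilFPInjective_hom {E : Type u} [AddCommGroup E]
    [Module R E] (hE : IsInjectiveCogenerator R E) (hNP : (nilradical R).IsPrime)
    (h : IsNonnilFPInjective R (M →ₗ[R] E)) : IsPhiFlat R M :=
  isPhiFlat_of_forall_finitePresentation hNP fun T _ _ hfp hT =>
    hE.subsingleton_ext_one_hom_iff.1 (h T hfp hT)

end PhiFlat

/-- For an NP-ring `R` and an `R`-module `M`, the following are
equivalent: (1) `M` is φ-flat; (2) `Hom_R(M,E)` is nonnil-injective for every injective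
`E`; (3) `Hom_R(M,E)` is nonnil-FP-injective for every injective `E`; (4) `Hom_R(M,E)`
is nonnil-injective for every injective cogenerator `E`; (5) `Hom_R(M,E)` is
nonnil-FP-injective for every injective cogenerator `E`. -/
theorem phiFlat_iff_hom_nonnilInjective (R : Type u) [CommRing R]
    (hNP : (nilradical R).IsPrime) (M : Type u) [AddCommGroup M] [Module R M] :
    (IsPhiFlat R M ↔
      ∀ (E : Type u) [AddCommGroup E] [Module R E], Module.Injective R E →
        IsNonnilInjective R (M →ₗ[R] E)) ∧
    (IsPhiFlat R M ↔
      ∀ (E : Type u) [AddCommGroup E] [Module R E], Module.Injective R E →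
        IsNonnilFPInjective R (M →ₗ[R] E)) ∧
    (IsPhiFlat R M ↔
      ∀ (E : Type u) [AddCommGroup E] [Module R E], IsInjectiveCogenerator R E →
        IsNonnilInjective R (M →ₗ[R] E)) ∧
    (IsPhiFlat R M ↔
      ∀ (E : Type u) [AddCommGroup E] [Module R E], IsInjectiveCogenerator R E →
        IsNonnilFPInjective R (M →ₗ[R] E)) := by
  have hC := isInjectiveCogenerator_characterModule R
  have of_hom : IsNonnilFPInjective R (M →ₗ[R] CharacterModule R) → IsPhiFlat R M :=
    hC.isPhiFlat_of_isNonnilFPInjective_hom hNP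
  refine ⟨⟨?_, ?_⟩, ⟨?_, ?_⟩, ⟨?_, ?_⟩, ⟨?_, ?_⟩⟩
  · exact fun h E _ _ hE => h.isNonnilInjective_hom hE
  · exact fun h => of_hom (h _ hC.1).isNonnilFPInjective
  · exact fun h E _ _ hE => (h.isNonnilInjective_hom hE).isNonnilFPInjective
  · exact fun h => of_hom (h _ hC.1)
  · exact fun h E _ _ hE => h.isNonnilInjective_hom hE.1
  · exact fun h => of_hom (h _ hC).isNonnilFPInjective
  · exact fun h E _ _ hE => (h.isNonnilInjective_hom hE.1).isNonnilFPInjective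
  · exact fun h => of_hom (h _ hC)
end

section
/- Let R be a φ-ring. Then R is nonnil-coherent if and only if every direct limit (filtered colimit over a directed index set) of nonnil-FP-injective R-modules is nonnil-FP-injective. -/
open CategoryTheory

universe u

/-!
For an exact sequence `0 → K → P → T → 0` with `P` projective, `Ext¹(T, M) = 0` iff every map
`K → M` extends to `P`. A finitely generated module is finitely presented iff every map from it to
a direct limit of injectives factors through a stage.

If `T` is finitely presented and φ-torsion and `P` is finite free, nonnil-coherence makes `K`
finitely presented, by induction on the rank of `P`: the first coordinate maps `K` onto a nonnil
ideal. So every map from `K` to a direct limit of nonnil-FP-injectives factors through a stage and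
extends there. Conversely, for a finitely generated nonnil ideal `I`, a map from `I` to a direct
limit of injectives extends to `R` because `Ext¹(R ⧸ I, ·)` vanishes on the limit. The extension
factors through a stage, hence so does the map, and `I` is finitely presented.
-/

section Ext

variable {R : Type u} [CommRing R]

-- Schanuel comparison: lifts `α : Q → P` and `β : P → Q` of `id : T → T` exist, and `id - β ∘ α`
-- factors through `L`.
theorem surjective_lcomp_of_exact {K P L Q T M : Type*}
    [AddCommGroup K] [Module R K] [AddCommGroup P] [Module R P] [AddCommGroup L] [Module R L]
    [AddCommGroup Q] [Module R Q] [AddCommGroup T] [Module R T] [AddCommGroup M] [Module R M]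
    [Module.Projective R P] [Module.Projective R Q]
    {i : K →ₗ[R] P} {p : P →ₗ[R] T} {j : L →ₗ[R] Q} {q : Q →ₗ[R] T}
    (hip : Function.Exact i p) (hp : Function.Surjective p)
    (hj : Function.Injective j) (hjq : Function.Exact j q) (hq : Function.Surjective q)
    (hM : Function.Surjective (i.lcomp R M)) : Function.Surjective (j.lcomp R M) := by
  intro g
  obtain ⟨α, hα⟩ := Module.projective_lifting_property p q hp
  obtain ⟨β, hβ⟩ := Module.projective_lifting_property q p hq
  replace hα (x : Q) : p (α x) = q x := LinearMap.congr_fun hα x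
  replace hβ (x : P) : q (β x) = p x := LinearMap.congr_fun hβ x
  have hβi (k : K) : (β ∘ₗ i) k ∈ LinearMap.range j :=
    (hjq _).1 ((hβ (i k)).trans (hip.apply_apply_eq_zero k))
  have hβα (x : Q) : (LinearMap.id - β ∘ₗ α : Q →ₗ[R] Q) x ∈ LinearMap.range j :=
    (hjq _).1 (by simp [hα, hβ])
  let β' : K →ₗ[R] L := LinearMap.codRestrictOfInjective (β ∘ₗ i) j hj hβi
  let γ : Q →ₗ[R] L := LinearMap.codRestrictOfInjective (LinearMap.id - β ∘ₗ α) j hj hβα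
  obtain ⟨h, hh⟩ := hM (g ∘ₗ β')
  refine ⟨h ∘ₗ α + g ∘ₗ γ, LinearMap.ext fun l => ?_⟩
  obtain ⟨k, hk⟩ := (hip (α (j l))).1 ((hα _).trans (hjq.apply_apply_eq_zero l))
  have decomposition : β' k + γ (j l) = l := hj (by simp [β', γ, hk])
  calc h (α (j l)) + g (γ (j l)) = g (β' k) + g (γ (j l)) := by
        rw [← hk]; exact congrArg (· + _) (LinearMap.congr_fun hh k)
    _ = g l := by rw [← map_add, decomposition]

theorem exact_lcomp_iff_surjective_lcomp_subtype_range {A B C M : Type*}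
    [AddCommGroup A] [Module R A] [AddCommGroup B] [Module R B] [AddCommGroup C] [Module R C]
    [AddCommGroup M] [Module R M] {a : A →ₗ[R] B} {b : B →ₗ[R] C} (hab : Function.Exact a b) :
    Function.Exact (b.lcomp R M) (a.lcomp R M) ↔
      Function.Surjective ((LinearMap.range b).subtype.lcomp R M) := by
  have hsurj := b.surjective_rangeRestrict
  have hinj := LinearMap.lcomp_injective_of_surjective (S := R) (N := M) b.rangeRestrict hsurj
  have hexact : Function.Exact (b.rangeRestrict.lcomp R M) (a.lcomp R M) :=
    LinearMap.exact_lcomp_of_exact_of_surjective M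
      ((Submodule.injective_subtype (LinearMap.range b)).comp_exact_iff_exact.1 hab) hsurj
  refine ⟨fun H g => ?_, fun H g => ⟨fun hg => ?_, ?_⟩⟩
  · obtain ⟨h, hh⟩ := (H (g ∘ₗ b.rangeRestrict)).1 (hexact.apply_apply_eq_zero g)
    exact ⟨h, hinj hh⟩
  · obtain ⟨k, rfl⟩ := (hexact g).1 hg
    obtain ⟨h, rfl⟩ := H k
    exact ⟨h, rfl⟩
  · rintro ⟨h, rfl⟩
    exact hexact.apply_apply_eq_zero (h ∘ₗ (LinearMap.range b).subtype)

theorem subsingleton_ext_one_iff_exact_lcomp {T : ModuleCat.{u} R} (P : ProjectiveResolution T)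
    (M : ModuleCat.{u} R) :
    Subsingleton (((Ext R (ModuleCat.{u} R) 1).obj (Opposite.op T)).obj M) ↔
      Function.Exact ((P.complex.d 1 0).hom.lcomp R M) ((P.complex.d 2 1).hom.lcomp R M) := by
  have hd : (P.complex.d 1 0).hom ∘ₗ (P.complex.d 2 1).hom = 0 :=
    congrArg ModuleCat.Hom.hom (P.complex.d_comp_d 2 1 0)
  have cocycle_iff : Subsingleton (((Ext R (ModuleCat.{u} R) 1).obj (Opposite.op T)).obj M) ↔
      ∀ g : P.complex.X 1 ⟶ M, P.complex.d 2 1 ≫ g = 0 →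
        ∃ h : P.complex.X 0 ⟶ M, P.complex.d 1 0 ≫ h = g := by
    rw [← ModuleCat.isZero_iff_subsingleton, (P.isoExt 1 M).isZero_iff,
      ← HomologicalComplex.exactAt_iff_isZero_homology,
      HomologicalComplex.exactAt_iff' _ 0 1 2 (by simp) (by simp),
      ShortComplex.moduleCat_exact_iff]
    rfl
  refine cocycle_iff.trans ⟨fun H g => ⟨fun hg => ?_, ?_⟩, fun H g hg => ?_⟩
  · obtain ⟨h, hh⟩ := H (ModuleCat.ofHom g) (ModuleCat.hom_ext hg)
    exact ⟨h.hom, congrArg ModuleCat.Hom.hom hh⟩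
  · rintro ⟨h, rfl⟩
    exact congrArg (h ∘ₗ ·) hd |>.trans (LinearMap.comp_zero h)
  · obtain ⟨h, hh⟩ := (H g.hom).1 (congrArg ModuleCat.Hom.hom hg)
    exact ⟨ModuleCat.ofHom h, ModuleCat.hom_ext hh⟩

theorem subsingleton_ext_one_iff_surjective_lcomp_s7 {K P T : Type u}
    [AddCommGroup K] [Module R K] [AddCommGroup P] [Module R P] [Module.Projective R P]
    [AddCommGroup T] [Module R T] {i : K →ₗ[R] P} {p : P →ₗ[R] T}
    (hi : Function.Injective i) (hip : Function.Exact i p) (hp : Function.Surjective p)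
    (M : Type u) [AddCommGroup M] [Module R M] :
    Subsingleton (((Ext R (ModuleCat.{u} R) 1).obj (Opposite.op (ModuleCat.of R T))).obj
      (ModuleCat.of R M)) ↔ Function.Surjective (i.lcomp R M) := by
  let F := projectiveResolution (ModuleCat.of R T)
  have exact₁ : Function.Exact (F.complex.d 2 1).hom (F.complex.d 1 0).hom :=
    (ShortComplex.ShortExact.moduleCat_exact_iff_function_exact _).1 (F.exact_succ 0)
  have exact₀ : Function.Exact (F.complex.d 1 0).hom (F.π.f 0).hom :=
    (ShortComplex.ShortExact.moduleCat_exact_iff_function_exact _).1 F.exact₀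
  have range_exact : Function.Exact (LinearMap.range (F.complex.d 1 0).hom).subtype (F.π.f 0).hom :=
    (F.complex.d 1 0).hom.surjective_rangeRestrict.comp_exact_iff_exact.1 exact₀
  have : Module.Projective R (F.complex.X 0) :=
    (IsProjective.iff_projective _).2 (F.projective 0)
  have hπ : Function.Surjective (F.π.f 0).hom := (ModuleCat.epi_iff_surjective _).1 inferInstance
  rw [subsingleton_ext_one_iff_exact_lcomp F, exact_lcomp_iff_surjective_lcomp_subtype_range exact₁]
  exact ⟨surjective_lcomp_of_exact range_exact hπ hi hip hp,
    surjective_lcomp_of_exact hip hp (Submodule.injective_subtype _) range_exact hπ⟩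

end Ext

section DirectLimit

variable {R : Type*} [CommRing R] {ι : Type*} [Preorder ι] [DecidableEq ι]
  {G : ι → Type*} [∀ i, AddCommGroup (G i)] [∀ i, Module R (G i)]
  {f : ∀ i j, i ≤ j → G i →ₗ[R] G j} {N : Type*} [AddCommGroup N] [Module R N]

theorem directLimit_of_comp_transition {i j : ι} (hij : i ≤ j) :
    Module.DirectLimit.of R ι G f j ∘ₗ f i j hij = Module.DirectLimit.of R ι G f i :=
  LinearMap.ext fun _ => Module.DirectLimit.of_f

variable [IsDirected ι (· ≤ ·)]

theorem exists_transition_comp_eq_zero [DirectedSystem G (fun i j h => f i j h)]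
    [Module.Finite R N] {i : ι} {φ : N →ₗ[R] G i}
    (hφ : Module.DirectLimit.of R ι G f i ∘ₗ φ = 0) :
    ∃ (j : ι) (hij : i ≤ j), f i j hij ∘ₗ φ = 0 := by
  have : Nonempty ι := ⟨i⟩
  obtain ⟨s, hs⟩ : (⊤ : Submodule R N).FG := Module.Finite.fg_top
  have eventually_zero (y : N) : ∀ᶠ j in Filter.atTop, ∀ hij : i ≤ j, f i j hij (φ y) = 0 := by
    obtain ⟨j, hij, hj⟩ := Module.DirectLimit.of.zero_exact (LinearMap.congr_fun hφ y)
    filter_upwards [Filter.eventually_ge_atTop j] with k hjk hik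
    rw [← DirectedSystem.map_map (f := fun i j h => f i j h) hij hjk, hj, map_zero]
  obtain ⟨j, hij, hj⟩ := ((Filter.eventually_ge_atTop i).and
    ((Filter.eventually_all_finset s).2 fun y _ => eventually_zero y)).exists
  exact ⟨j, hij, LinearMap.ext_on hs fun y hy => hj y hy hij⟩

theorem exists_transition_comp_eq [DirectedSystem G (fun i j h => f i j h)] [Module.Finite R N]
    {i : ι} {φ ψ : N →ₗ[R] G i}
    (h : Module.DirectLimit.of R ι G f i ∘ₗ φ = Module.DirectLimit.of R ι G f i ∘ₗ ψ) :
    ∃ (j : ι) (hij : i ≤ j), f i j hij ∘ₗ φ = f i j hij ∘ₗ ψ := by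
  rw [← sub_eq_zero, ← LinearMap.comp_sub] at h
  simpa only [LinearMap.comp_sub, sub_eq_zero] using exists_transition_comp_eq_zero h

variable [Nonempty ι]

theorem exists_directLimit_of_comp_eq_of_pi {n : ℕ}
    (g : (Fin n → R) →ₗ[R] Module.DirectLimit G f) :
    ∃ (i : ι) (φ : (Fin n → R) →ₗ[R] G i), Module.DirectLimit.of R ι G f i ∘ₗ φ = g := by
  choose a x hx using fun k : Fin n => Module.DirectLimit.exists_of (g (Pi.single k 1))
  obtain ⟨i, hi⟩ := Finite.exists_le a
  refine ⟨i, Fintype.linearCombination R fun k => f (a k) i (hi k) (x k),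
    LinearMap.pi_ext' fun k => LinearMap.ext_ring ?_⟩
  simp [Fintype.linearCombination_apply_single, hx]

theorem exists_directLimit_of_comp_eq [DirectedSystem G (fun i j h => f i j h)]
    [Module.FinitePresentation R N] (g : N →ₗ[R] Module.DirectLimit G f) :
    ∃ (i : ι) (g' : N →ₗ[R] G i), Module.DirectLimit.of R ι G f i ∘ₗ g' = g := by
  obtain ⟨n, p, hp⟩ := Module.Finite.exists_fin' R N
  have : Module.Finite R (LinearMap.ker p) :=
    Module.Finite.of_fg (Module.FinitePresentation.fg_ker p hp)
  obtain ⟨i, φ, hφ⟩ := exists_directLimit_of_comp_eq_of_pi (g ∘ₗ p)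
  obtain ⟨j, hij, hj⟩ : ∃ (j : ι) (hij : i ≤ j), f i j hij ∘ₗ φ ∘ₗ (LinearMap.ker p).subtype = 0 :=
    exists_transition_comp_eq_zero <| by
      rw [← LinearMap.comp_assoc, hφ, LinearMap.comp_assoc, p.comp_ker_subtype, LinearMap.comp_zero]
  obtain ⟨g', hg'⟩ : ∃ g' : N →ₗ[R] G j, g' ∘ₗ p = f i j hij ∘ₗ φ :=
    (LinearMap.exact_lcomp_of_exact_of_surjective (G j) p.exact_subtype_ker_map hp _).1 hj
  refine ⟨j, g', (LinearMap.cancel_right hp).1 ?_⟩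
  rw [LinearMap.comp_assoc, hg', ← LinearMap.comp_assoc, directLimit_of_comp_transition, hφ]

end DirectLimit

section Injective

theorem exists_injective_linearMap_to_injective (R : Type u) [Ring R] (M : Type u) [AddCommGroup M]
    [Module R M] :
    ∃ (E : Type u) (_ : AddCommGroup E) (_ : Module R E),
      Module.Injective R E ∧ ∃ e : M →ₗ[R] E, Function.Injective e := by
  let E : ModuleCat.{u} R := Injective.under (ModuleCat.of R M)
  have : Injective (ModuleCat.of R E) := inferInstanceAs (Injective E)
  exact ⟨E, inferInstance, inferInstance, Module.injective_module_of_injective_object R E,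
    (Injective.ι (ModuleCat.of R M)).hom, (ModuleCat.mono_iff_injective _).1 inferInstance⟩

-- Tail products of injective modules form a directed system under restriction, so no functorial
-- choice of injective embeddings is needed.
theorem exists_injective_directedSystem_ker_eq {R : Type u} [Ring R] {M : Type u} [AddCommGroup M]
    [Module R M] {ι : Type u} [Preorder ι] (K : ι →o Submodule R M) :
    ∃ (G : ι → Type u) (_ : ∀ i, AddCommGroup (G i)) (_ : ∀ i, Module R (G i))
      (f : ∀ i j, i ≤ j → G i →ₗ[R] G j) (d : ∀ i, M →ₗ[R] G i),
      DirectedSystem G (fun i j h => f i j h) ∧ (∀ i, Module.Injective R (G i)) ∧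
        (∀ i j h, f i j h ∘ₗ d i = d j) ∧ ∀ i, LinearMap.ker (d i) = K i := by
  choose E _ _ hE e he using fun i => exists_injective_linearMap_to_injective R (M ⧸ K i)
  let G (i : ι) : Type u := ∀ k : Set.Ici i, E k
  let f (i j : ι) (hij : i ≤ j) : G i →ₗ[R] G j :=
    LinearMap.pi fun k => LinearMap.proj (⟨k, hij.trans k.2⟩ : Set.Ici i)
  let d (i : ι) : M →ₗ[R] G i := LinearMap.pi fun k => e k ∘ₗ (K k).mkQ
  have ker_component (k : ι) : LinearMap.ker (e k ∘ₗ (K k).mkQ) = K k := by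
    rw [LinearMap.ker_comp_of_ker_eq_bot _ (LinearMap.ker_eq_bot.2 (he k)), Submodule.ker_mkQ]
  have ker_d (i : ι) : LinearMap.ker (d i) = K i := by
    have : LinearMap.ker (d i) = ⨅ k : Set.Ici i, K k :=
      (LinearMap.ker_pi _).trans (iInf_congr fun k => ker_component k)
    rw [this]
    exact le_antisymm (iInf_le _ (⟨i, le_rfl⟩ : Set.Ici i)) (le_iInf fun k => K.monotone k.2)
  exact ⟨G, inferInstance, inferInstance, f, d, ⟨fun _ _ => rfl, fun _ _ _ _ _ _ => rfl⟩,
    fun i => inferInstanceAs (Module.Injective R (∀ k : Set.Ici i, E k)), fun _ _ _ => rfl, ker_d⟩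

-- Embed `Rⁿ ⧸ K`, for `K` finitely generated in `ker p`, into injectives. The induced map from
-- `N = Rⁿ ⧸ ker p` to the limit factors through a stage only if some `K` is all of `ker p`.
theorem finitePresentation_of_forall_exists_directLimit_of_comp_eq {R N : Type u}
    [CommRing R] [AddCommGroup N] [Module R N] [Module.Finite R N]
    (H : ∀ (ι : Type u) [Preorder ι] [IsDirected ι (· ≤ ·)] [Nonempty ι] [DecidableEq ι]
      (G : ι → Type u) [∀ i, AddCommGroup (G i)] [∀ i, Module R (G i)]
      (f : ∀ i j, i ≤ j → G i →ₗ[R] G j) [DirectedSystem G (fun i j h => f i j h)],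
      (∀ i, Module.Injective R (G i)) → ∀ g : N →ₗ[R] Module.DirectLimit G f,
        ∃ (i : ι) (g' : N →ₗ[R] G i), Module.DirectLimit.of R ι G f i ∘ₗ g' = g) :
    Module.FinitePresentation R N := by
  classical
  obtain ⟨n, p, hp⟩ := Module.Finite.exists_fin' R N
  let ι := {K : Submodule R (Fin n → R) // K.FG ∧ K ≤ LinearMap.ker p}
  have : IsDirected ι (· ≤ ·) := ⟨fun K L =>
    ⟨⟨K.1 ⊔ L.1, K.2.1.sup L.2.1, sup_le K.2.2 L.2.2⟩,
      show K.1 ≤ _ from le_sup_left, show L.1 ≤ _ from le_sup_right⟩⟩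
  let : OrderBot ι := { bot := ⟨⊥, Submodule.fg_bot, bot_le⟩, bot_le := fun K => bot_le (a := K.1) }
  obtain ⟨G, _, _, f, d, _, hG, hfd, hker⟩ :=
    exists_injective_directedSystem_ker_eq (⟨Subtype.val, fun _ _ h => h⟩ : ι →o _)
  replace hker (K : ι) : LinearMap.ker (d K) = K.1 := hker K
  have of_comp_d (K : ι) : Module.DirectLimit.of R ι G f K ∘ₗ d K =
      Module.DirectLimit.of R ι G f ⊥ ∘ₗ d ⊥ := by
    rw [← hfd ⊥ K bot_le, ← LinearMap.comp_assoc, directLimit_of_comp_transition]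
  have comp_ker : (Module.DirectLimit.of R ι G f ⊥ ∘ₗ d ⊥) ∘ₗ (LinearMap.ker p).subtype = 0 := by
    ext1 x
    let K : ι := ⟨R ∙ x.1, Submodule.fg_span_singleton _,
      (Submodule.span_singleton_le_iff_mem _ _).2 x.2⟩
    have hx : d K x = 0 := by
      rw [← LinearMap.mem_ker, hker]
      exact Submodule.mem_span_singleton_self _
    rw [← of_comp_d K]
    simp [hx]
  obtain ⟨g, hg⟩ : ∃ g, g ∘ₗ p = Module.DirectLimit.of R ι G f ⊥ ∘ₗ d ⊥ :=
    (LinearMap.exact_lcomp_of_exact_of_surjective _ p.exact_subtype_ker_map hp _).1 comp_ker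
  obtain ⟨K, g', hg'⟩ := H ι G f hG g
  obtain ⟨L, hKL, hL⟩ : ∃ (L : ι) (hKL : K ≤ L), f K L hKL ∘ₗ g' ∘ₗ p = f K L hKL ∘ₗ d K :=
    exists_transition_comp_eq <| by rw [← LinearMap.comp_assoc, hg', hg, of_comp_d K]
  have ker_le : LinearMap.ker p ≤ L.1 := by
    rw [← hker, ← hfd K L hKL, ← hL, ← LinearMap.comp_assoc]
    exact LinearMap.ker_le_ker_comp p _
  exact Module.finitePresentation_of_surjective p hp (le_antisymm ker_le L.2.2 ▸ L.2.1)

end Injective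

section ShortExact

variable {R A B C : Type*} [Ring R] [AddCommGroup A] [Module R A] [AddCommGroup B] [Module R B]
  [AddCommGroup C] [Module R C] [Module.FinitePresentation R C] {a : A →ₗ[R] B} {b : B →ₗ[R] C}

theorem finite_of_exact_of_finitePresentation [Module.Finite R B] (ha : Function.Injective a)
    (hab : Function.Exact a b) (hb : Function.Surjective b) : Module.Finite R A := by
  have : Module.Finite R (LinearMap.range a) :=
    Module.Finite.of_fg (hab.linearMap_ker_eq ▸ Module.FinitePresentation.fg_ker b hb)
  exact Module.Finite.equiv (LinearEquiv.ofInjective a ha).symm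

theorem finitePresentation_of_exact [Module.FinitePresentation R A] (ha : Function.Injective a)
    (hab : Function.Exact a b) (hb : Function.Surjective b) : Module.FinitePresentation R B := by
  have : Module.FinitePresentation R (LinearMap.ker b) :=
    hab.linearMap_ker_eq ▸ Module.FinitePresentation.of_equiv (LinearEquiv.ofInjective a ha)
  exact Module.finitePresentation_of_ker b hb

end ShortExact

section ExtDirectLimit

variable {R : Type u} [CommRing R] {ι : Type u} [Preorder ι] [IsDirected ι (· ≤ ·)] [Nonempty ι]
  [DecidableEq ι] {G : ι → Type u} [∀ i, AddCommGroup (G i)] [∀ i, Module R (G i)]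
  {f : ∀ i j, i ≤ j → G i →ₗ[R] G j} [DirectedSystem G (fun i j h => f i j h)]
  {K P T : Type u} [AddCommGroup K] [Module R K] [AddCommGroup P] [Module R P]
  [Module.Projective R P] [AddCommGroup T] [Module R T] {i : K →ₗ[R] P} {p : P →ₗ[R] T}

theorem subsingleton_ext_one_directLimit [Module.FinitePresentation R K]
    (hi : Function.Injective i) (hip : Function.Exact i p) (hp : Function.Surjective p)
    (H : ∀ j, Subsingleton (((Ext R (ModuleCat.{u} R) 1).obj (Opposite.op (ModuleCat.of R T))).obj
      (ModuleCat.of R (G j)))) :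
    Subsingleton (((Ext R (ModuleCat.{u} R) 1).obj (Opposite.op (ModuleCat.of R T))).obj
      (ModuleCat.of R (Module.DirectLimit G f))) := by
  refine (subsingleton_ext_one_iff_surjective_lcomp_s7 hi hip hp _).2 fun g => ?_
  obtain ⟨j, g', rfl⟩ := exists_directLimit_of_comp_eq g
  obtain ⟨h, rfl⟩ := (subsingleton_ext_one_iff_surjective_lcomp_s7 hi hip hp _).1 (H j) g'
  exact ⟨Module.DirectLimit.of R ι G f j ∘ₗ h, rfl⟩

theorem exists_directLimit_of_comp_eq_of_subsingleton_ext_one [Module.FinitePresentation R P]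
    (hi : Function.Injective i) (hip : Function.Exact i p) (hp : Function.Surjective p)
    (H : Subsingleton (((Ext R (ModuleCat.{u} R) 1).obj (Opposite.op (ModuleCat.of R T))).obj
      (ModuleCat.of R (Module.DirectLimit G f)))) (g : K →ₗ[R] Module.DirectLimit G f) :
    ∃ (j : ι) (g' : K →ₗ[R] G j), Module.DirectLimit.of R ι G f j ∘ₗ g' = g := by
  obtain ⟨h, rfl⟩ := (subsingleton_ext_one_iff_surjective_lcomp_s7 hi hip hp _).1 H g
  obtain ⟨j, h', rfl⟩ := exists_directLimit_of_comp_eq h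
  exact ⟨j, h' ∘ₗ i, rfl⟩

end ExtDirectLimit

section Nonnil

variable {R : Type u} [CommRing R]

theorem isPhiTorsion_quotient {I : Ideal R} (hI : ¬ I ≤ nilradical R) : IsPhiTorsion R (R ⧸ I) :=
  fun t => ⟨I, hI, fun _ ha => Module.mem_annihilator.1 (I.annihilator_quotient.symm ▸ ha) t⟩

theorem isNonnilFPInjective_of_injective (M : Type u) [AddCommGroup M] [Module R M]
    [Module.Injective R M] : IsNonnilFPInjective R M := by
  intro T _ _ _ _
  obtain ⟨n, p, hp⟩ := Module.Finite.exists_fin' R T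
  have hinj := Submodule.injective_subtype (LinearMap.ker p)
  exact (subsingleton_ext_one_iff_surjective_lcomp_s7 hinj p.exact_subtype_ker_map hp M).2
    (Module.Injective.extension_property R M _ _ _ hinj)

theorem IsNonnilCoherent.finitePresentation_submodule_pi (coh : IsNonnilCoherent R) {n : ℕ}
    (K : Submodule R (Fin n → R)) [Module.Finite R K]
    (h : ∀ k, ∃ s ∉ nilradical R, Pi.single k s ∈ K) : Module.FinitePresentation R K := by
  induction n with
  | zero => exact Module.finitePresentation_of_projective R K
  | succ n ih =>
    let φ : K →ₗ[R] R := LinearMap.proj 0 ∘ₗ K.subtype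
    let cons₀ : (Fin n → R) →ₗ[R] Fin (n + 1) → R := LinearMap.vecCons 0 LinearMap.id
    let K' : Submodule R (Fin n → R) := K.comap cons₀
    have range_fp : Module.FinitePresentation R (LinearMap.range φ) := by
      obtain ⟨s, hs, hsK⟩ := h 0
      exact coh _ (Submodule.fg_range φ) fun hle => hs (hle ⟨⟨_, hsK⟩, by simp [φ]⟩)
    have cons₀_tail {x : Fin (n + 1) → R} (hx : x 0 = 0) : cons₀ (Matrix.vecTail x) = x :=
      (congrArg (Matrix.vecCons · _) hx.symm).trans (Matrix.cons_head_tail x)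
    have cons₀_injective : Function.Injective (cons₀.submoduleComap K) := fun x y hxy =>
      Subtype.ext (Matrix.vecCons_inj.1 (congrArg Subtype.val hxy)).2
    have cons₀_exact : Function.Exact (cons₀.submoduleComap K) φ.rangeRestrict := by
      refine fun x => ⟨fun hx => ?_, ?_⟩
      · have hx₀ : x.1 0 = 0 := congrArg Subtype.val hx
        exact ⟨⟨Matrix.vecTail x.1, (cons₀_tail hx₀).symm ▸ x.2⟩, Subtype.ext (cons₀_tail hx₀)⟩
      · rintro ⟨y, rfl⟩
        rfl
    have K'_finite : Module.Finite R K' :=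
      finite_of_exact_of_finitePresentation cons₀_injective cons₀_exact φ.surjective_rangeRestrict
    have K'_fp : Module.FinitePresentation R K' := ih K' fun k => by
      obtain ⟨s, hs, hsK⟩ := h k.succ
      have cons₀_single : cons₀ (Pi.single k s) = Pi.single k.succ s :=
        funext <| Fin.cases rfl fun l => by simp [cons₀, Pi.single_apply]
      exact ⟨s, hs, Submodule.mem_comap.2 (cons₀_single ▸ hsK)⟩
    exact finitePresentation_of_exact cons₀_injective cons₀_exact φ.surjective_rangeRestrict

theorem IsNonnilCoherent.finitePresentation_ker (coh : IsNonnilCoherent R) {T : Type u}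
    [AddCommGroup T] [Module R T] [Module.FinitePresentation R T] (hT : IsPhiTorsion R T)
    {n : ℕ} {p : (Fin n → R) →ₗ[R] T} (hp : Function.Surjective p) :
    Module.FinitePresentation R (LinearMap.ker p) := by
  have := Module.Finite.of_fg (Module.FinitePresentation.fg_ker p hp)
  refine coh.finitePresentation_submodule_pi _ fun k => ?_
  obtain ⟨I, hI, hIk⟩ := hT (p (Pi.single k 1))
  obtain ⟨s, hsI, hs⟩ := SetLike.not_le_iff_exists.1 hI
  refine ⟨s, hs, ?_⟩
  rw [LinearMap.mem_ker, ← hIk s hsI, ← map_smul, ← Pi.single_smul, smul_eq_mul, mul_one]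

theorem IsNonnilCoherent.isNonnilFPInjective_directLimit (coh : IsNonnilCoherent R)
    {ι : Type u} [Preorder ι] [IsDirected ι (· ≤ ·)] [Nonempty ι] [DecidableEq ι]
    {G : ι → Type u} [∀ i, AddCommGroup (G i)] [∀ i, Module R (G i)]
    {f : ∀ i j, i ≤ j → G i →ₗ[R] G j} [DirectedSystem G (fun i j h => f i j h)]
    (hG : ∀ i, IsNonnilFPInjective R (G i)) : IsNonnilFPInjective R (Module.DirectLimit G f) := by
  intro T _ _ _ hT
  obtain ⟨n, p, hp⟩ := Module.Finite.exists_fin' R T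
  have := coh.finitePresentation_ker hT hp
  exact subsingleton_ext_one_directLimit (Submodule.injective_subtype _) p.exact_subtype_ker_map hp
    fun i => hG i T inferInstance hT

theorem isNonnilCoherent_of_directLimit_injective
    (H : ∀ (ι : Type u) [Preorder ι] [IsDirected ι (· ≤ ·)] [Nonempty ι] [DecidableEq ι]
      (G : ι → Type u) [∀ i, AddCommGroup (G i)] [∀ i, Module R (G i)]
      (f : ∀ i j, i ≤ j → G i →ₗ[R] G j) [DirectedSystem G (fun i j h => f i j h)],
      (∀ i, Module.Injective R (G i)) → IsNonnilFPInjective R (Module.DirectLimit G f)) :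
    IsNonnilCoherent R := by
  intro I hI hnil
  have : Module.Finite R I := Module.Finite.of_fg hI
  have hfp : Module.FinitePresentation R (R ⧸ I) :=
    Module.finitePresentation_of_surjective I.mkQ I.mkQ_surjective (I.ker_mkQ.symm ▸ hI)
  exact finitePresentation_of_forall_exists_directLimit_of_comp_eq fun ι _ _ _ _ G _ _ f _ hG =>
    exists_directLimit_of_comp_eq_of_subsingleton_ext_one I.injective_subtype
      (LinearMap.exact_subtype_mkQ I) I.mkQ_surjective
      (H ι G f hG (R ⧸ I) hfp (isPhiTorsion_quotient hnil))

end Nonnil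

theorem nonnilCoherent_iff_directLimit_nonnilFPInjective_general (R : Type u) [CommRing R] :
    IsNonnilCoherent R ↔
      ∀ (ι : Type u) [Preorder ι] [IsDirected ι (· ≤ ·)] [Nonempty ι] [DecidableEq ι]
        (G : ι → Type u) [∀ i, AddCommGroup (G i)] [∀ i, Module R (G i)]
        (f : ∀ i j, i ≤ j → G i →ₗ[R] G j) [DirectedSystem G (fun i j h => f i j h)],
        (∀ i, IsNonnilFPInjective R (G i)) → IsNonnilFPInjective R (Module.DirectLimit G f) :=
  ⟨fun coh _ _ _ _ _ _ _ _ _ _ => coh.isNonnilFPInjective_directLimit,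
    fun H => isNonnilCoherent_of_directLimit_injective fun ι _ _ _ _ G _ _ f _ hG =>
      H ι G f fun i => have := hG i; isNonnilFPInjective_of_injective (G i)⟩

/-- A φ-ring `R` is nonnil-coherent if and only if every direct limit
of nonnil-FP-injective `R`-modules is nonnil-FP-injective. -/
theorem nonnilCoherent_iff_directLimit_nonnilFPInjective (R : Type u) [CommRing R]
    (hR : IsPhiRing R) :
    IsNonnilCoherent R ↔
      ∀ (ι : Type u) [Preorder ι] [IsDirected ι (· ≤ ·)] [Nonempty ι] [DecidableEq ι]
        (G : ι → Type u) [∀ i, AddCommGroup (G i)] [∀ i, Module R (G i)]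
        (f : ∀ i j, i ≤ j → G i →ₗ[R] G j) [DirectedSystem G (fun i j h => f i j h)],
        (∀ i, IsNonnilFPInjective R (G i)) →
          IsNonnilFPInjective R (Module.DirectLimit G f) :=
  nonnilCoherent_iff_directLimit_nonnilFPInjective_general R
end
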